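/- Let s ≥ 0 be real and let ρ be a non-trivial zero of the Riemann zeta function. Set d := min_{t ≥ 0} |ρ − s − t|. Then uniformly for x ≥ 2: ∫₀^∞ x^{ρ−s−t}/(ρ−s−t) dt = x^{ρ−s}/( (ρ−s) log x ) + O( x^{Re ρ − s}/( d |ρ−s| (log x)² ) ), with an absolute implied constant. -/

import Mathlib

open Real Complex MeasureTheory

/-!
Write `w = ρ - s`, `L = log x` and let `d` be the distance from `w` to the ray `[0, ∞)`. Since
`x ^ (w - t) = x ^ w * exp (-L t)`, one integration by parts produces the main term and leaves
`L⁻¹ ∫₀^∞ exp (-L t) / (w - t)² dt`. Multiply this by `‖w‖ ≤ ‖w - t‖ + t`. The first summand costs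
`∫ exp (-L t) / d = 1 / (d L)`. In the second, `t exp (-L t) ≤ 1 / L`, and `‖w - t‖²` is at least
`(t - p)² + d²`, where `p` is the point of the ray nearest to `w`, so that the Cauchy kernel bounds
it by `π / (d L)`. It remains to see that `w` is off the ray, that is, that a zero of `ζ` with
positive real part is not real: for `0 < σ < 1`,
`(σ - 1) ζ(σ) = σ (1 + (1 - σ) ∫₁^∞ {t} t^(-σ-1) dt) > 0`.
-/

open Filter Asymptotics Topology Set ProbabilityTheory

lemma integral_inv_sub_sq_add_sq (a : ℝ) {b : ℝ} (hb : 0 < b) :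
    ∫ t : ℝ, ((t - a) ^ 2 + b ^ 2)⁻¹ = π / b := by
  lift b to NNReal using hb.le
  have h := integral_cauchyPDFReal_eq_one a (γ := b) (by exact_mod_cast hb.ne')
  simp only [cauchyPDFReal_def, integral_const_mul] at h
  have hb0 : (b : ℝ) ≠ 0 := hb.ne'
  rw [mul_assoc, inv_mul_eq_one₀ Real.pi_ne_zero] at h
  rw [eq_div_iff hb0, mul_comm, ← h]

lemma integrable_inv_sub_sq_add_sq (a : ℝ) {b : ℝ} (hb : 0 < b) :
    Integrable fun t : ℝ => ((t - a) ^ 2 + b ^ 2)⁻¹ :=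
  .of_integral_ne_zero <| by rw [integral_inv_sub_sq_add_sq a hb]; positivity

lemma mul_exp_neg_mul_le_inv {L : ℝ} (hL : 0 < L) (t : ℝ) : t * rexp (-L * t) ≤ L⁻¹ := by
  rw [neg_mul, Real.exp_neg, ← div_eq_mul_inv, div_le_iff₀ (Real.exp_pos _), inv_mul_eq_div,
    le_div_iff₀ hL]
  linarith [Real.add_one_le_exp (L * t)]

/-- The distance `d` from `w` to the ray `[0, ∞)`, attained at the point `max (Re w) 0`. -/
noncomputable def distRay (w : ℂ) : ℝ := ‖w - (max w.re 0 : ℝ)‖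

section Laplace

variable {w : ℂ} {L t : ℝ}

lemma sq_add_distRay_sq_le (w : ℂ) (ht : 0 ≤ t) :
    (t - max w.re 0) ^ 2 + distRay w ^ 2 ≤ ‖w - t‖ ^ 2 := by
  simp only [distRay, ← Complex.normSq_eq_norm_sq, Complex.normSq_apply, Complex.sub_re,
    Complex.sub_im, Complex.ofReal_re, Complex.ofReal_im]
  rcases le_total w.re 0 with h | h
  · rw [max_eq_right h]
    nlinarith [mul_nonneg ht (neg_nonneg.mpr h)]
  · rw [max_eq_left h]
    nlinarith

lemma distRay_le (w : ℂ) (ht : 0 ≤ t) : distRay w ≤ ‖w - t‖ :=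
  le_of_sq_le_sq ((le_add_of_nonneg_left (sq_nonneg _)).trans (sq_add_distRay_sq_le w ht))
    (norm_nonneg _)

lemma sInf_norm_sub_image_Ici (w : ℂ) :
    sInf ((fun t : ℝ => ‖w - t‖) '' Ici 0) = distRay w :=
  IsLeast.csInf_eq ⟨mem_image_of_mem _ (mem_Ici.mpr (le_max_right _ _)),
    forall_mem_image.mpr fun _ ht => distRay_le w ht⟩

lemma distRay_pos (hw : ∀ t : ℝ, 0 ≤ t → w ≠ t) : 0 < distRay w :=
  norm_pos_iff.mpr (sub_ne_zero.mpr (hw _ (le_max_right _ _)))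

lemma norm_cexp_neg_mul (L t : ℝ) : ‖cexp (-L * t)‖ = rexp (-L * t) := by
  simp [Complex.norm_exp]

lemma integrableOn_exp_div_sub_pow (hw : ∀ t : ℝ, 0 ≤ t → w ≠ t) (hL : 0 < L) (k : ℕ) :
    IntegrableOn (fun t : ℝ => cexp (-L * t) / (w - t) ^ k) (Ioi 0) := by
  have hd := distRay_pos hw
  refine ((integrableOn_exp_mul_Ioi (neg_lt_zero.mpr hL) 0).div_const (distRay w ^ k)).mono' ?_ ?_
  · refine ContinuousOn.aestronglyMeasurable ?_ measurableSet_Ioi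
    exact .div (by fun_prop) (by fun_prop) fun t ht =>
      pow_ne_zero k (sub_ne_zero.mpr (hw t (le_of_lt ht)))
  · refine ae_restrict_of_forall_mem measurableSet_Ioi fun t ht => ?_
    rw [norm_div, norm_pow, norm_cexp_neg_mul]
    gcongr
    exact distRay_le w (le_of_lt ht)

lemma integral_exp_div_sub (hw : ∀ t : ℝ, 0 ≤ t → w ≠ t) (hL : 0 < L) :
    ∫ t in Ioi (0 : ℝ), cexp (-L * t) / (w - t) =
      1 / (w * L) + (∫ t in Ioi (0 : ℝ), cexp (-L * t) / (w - t) ^ 2) / L := by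
  have hLc : (L : ℂ) ≠ 0 := by exact_mod_cast hL.ne'
  have hint1 : IntegrableOn (fun t : ℝ => cexp (-L * t) / (w - t)) (Ioi 0) := by
    simpa using integrableOn_exp_div_sub_pow hw hL 1
  have hint2 := (integrableOn_exp_div_sub_pow hw hL 2).div_const (L : ℂ)
  have hderiv (t : ℝ) (ht : t ∈ Ici (0 : ℝ)) :
      HasDerivAt (fun t : ℝ => -(cexp (-L * t) / (w - t)) / L)
        (cexp (-L * t) / (w - t) - cexp (-L * t) / (w - t) ^ 2 / L) t := by
    have hne : w - t ≠ 0 := sub_ne_zero.mpr (hw t ht)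
    have hexp := ((hasDerivAt_id' (t : ℂ)).const_mul (-L : ℂ)).cexp
    have hsub := (hasDerivAt_id' (t : ℂ)).const_sub w
    refine ((hexp.div hsub hne).neg.div_const (L : ℂ)).comp_ofReal.congr_deriv ?_
    field_simp
    ring
  have htend : Tendsto (fun t : ℝ => -(cexp (-L * t) / (w - t)) / L) atTop (𝓝 0) :=
    tendsto_zero_of_hasDerivAt_of_integrableOn_Ioi (a := 0)
      (fun t ht => hderiv t (Ioi_subset_Ici_self ht)) (hint1.sub hint2) (hint1.neg.div_const _)
  have hftc := integral_Ioi_of_hasDerivAt_of_tendsto' hderiv (hint1.sub hint2) htend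
  rw [integral_sub hint1 hint2, integral_div] at hftc
  simp only [Complex.ofReal_zero, mul_zero, Complex.exp_zero, sub_zero] at hftc
  rw [← div_div]
  linear_combination hftc

lemma norm_mul_norm_exp_div_sub_sq_le (hw : ∀ t : ℝ, 0 ≤ t → w ≠ t) (hL : 0 < L) (ht : 0 ≤ t) :
    ‖w‖ * ‖cexp (-L * t) / (w - t) ^ 2‖ ≤
      rexp (-L * t) / distRay w + L⁻¹ * ((t - max w.re 0) ^ 2 + distRay w ^ 2)⁻¹ := by
  have hd := distRay_pos hw
  have hdt := distRay_le w ht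
  have hpos : 0 < ‖w - t‖ := hd.trans_le hdt
  have htri : ‖w‖ ≤ ‖w - t‖ + t := by
    simpa [abs_of_nonneg ht] using norm_add_le (w - t) (t : ℂ)
  rw [norm_div, norm_pow, norm_cexp_neg_mul]
  calc ‖w‖ * (rexp (-L * t) / ‖w - t‖ ^ 2)
      ≤ (‖w - t‖ + t) * (rexp (-L * t) / ‖w - t‖ ^ 2) := by gcongr
    _ = rexp (-L * t) / ‖w - t‖ + t * rexp (-L * t) * (‖w - t‖ ^ 2)⁻¹ := by field_simp
    _ ≤ _ := by
        gcongr
        · exact mul_exp_neg_mul_le_inv hL t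
        · exact sq_add_distRay_sq_le w ht

lemma norm_mul_norm_integral_exp_div_sub_sq_le (hw : ∀ t : ℝ, 0 ≤ t → w ≠ t) (hL : 0 < L) :
    ‖w‖ * ‖∫ t in Ioi (0 : ℝ), cexp (-L * t) / (w - t) ^ 2‖ ≤ (1 + π) / (distRay w * L) := by
  have hd := distRay_pos hw
  have hexp : IntegrableOn (fun t => rexp (-L * t) / distRay w) (Ioi 0) :=
    (integrableOn_exp_mul_Ioi (neg_lt_zero.mpr hL) 0).div_const _
  have hcauchy := (integrable_inv_sub_sq_add_sq (max w.re 0) hd).const_mul L⁻¹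
  calc ‖w‖ * ‖∫ t in Ioi (0 : ℝ), cexp (-L * t) / (w - t) ^ 2‖
      ≤ ∫ t in Ioi (0 : ℝ), ‖w‖ * ‖cexp (-L * t) / (w - t) ^ 2‖ := by
        rw [integral_const_mul]
        gcongr
        exact norm_integral_le_integral_norm _
    _ ≤ ∫ t in Ioi (0 : ℝ), (rexp (-L * t) / distRay w +
          L⁻¹ * ((t - max w.re 0) ^ 2 + distRay w ^ 2)⁻¹) :=
        setIntegral_mono_on ((integrableOn_exp_div_sub_pow hw hL 2).norm.const_mul _)
          (hexp.add hcauchy.integrableOn) measurableSet_Ioi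
          fun t ht => norm_mul_norm_exp_div_sub_sq_le hw hL (le_of_lt ht)
    _ = (∫ t in Ioi (0 : ℝ), rexp (-L * t) / distRay w) +
          ∫ t in Ioi (0 : ℝ), L⁻¹ * ((t - max w.re 0) ^ 2 + distRay w ^ 2)⁻¹ :=
        integral_add hexp hcauchy.integrableOn
    _ ≤ (∫ t in Ioi (0 : ℝ), rexp (-L * t) / distRay w) +
          ∫ t : ℝ, L⁻¹ * ((t - max w.re 0) ^ 2 + distRay w ^ 2)⁻¹ := by
        refine add_le_add le_rfl (setIntegral_le_integral hcauchy (.of_forall fun t => ?_))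
        positivity
    _ = (1 + π) / (distRay w * L) := by
        rw [integral_div, integral_exp_mul_Ioi (neg_lt_zero.mpr hL), integral_const_mul,
          integral_inv_sub_sq_add_sq _ hd]
        simp only [mul_zero, Real.exp_zero]
        field_simp

theorem norm_integral_exp_div_sub_sub_le (hw : ∀ t : ℝ, 0 ≤ t → w ≠ t) (hL : 0 < L) :
    ‖(∫ t in Ioi (0 : ℝ), cexp (-L * t) / (w - t)) - 1 / (w * L)‖ ≤
      (1 + π) / (distRay w * ‖w‖ * L ^ 2) := by
  have hd := distRay_pos hw
  have hw0 : 0 < ‖w‖ := norm_pos_iff.mpr (by simpa using hw 0 le_rfl)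
  rw [integral_exp_div_sub hw hL, add_sub_cancel_left, norm_div, Complex.norm_real,
    Real.norm_of_nonneg hL.le]
  have h := norm_mul_norm_integral_exp_div_sub_sq_le hw hL
  rw [← le_div_iff₀' hw0] at h
  calc _ ≤ (1 + π) / (distRay w * L) / ‖w‖ / L := by gcongr
    _ = _ := by field_simp

end Laplace

/-- The fractional part on `(1, ∞)`, extended by zero. Its Mellin transform at `-s` is the integral
`∫₁^∞ {t} t^(-s-1) dt` that continues `ζ(s)` to `Re s > 0`. -/
noncomputable def fractAboveOne : ℝ → ℂ :=
  indicator (Ioi 1) fun t => (Int.fract t : ℝ)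

section Zeta

variable {s : ℂ}

lemma norm_fractAboveOne_le_one (t : ℝ) : ‖fractAboveOne t‖ ≤ 1 := by
  refine (norm_indicator_le_norm_self _ _).trans ?_
  rw [Complex.norm_real, Real.norm_of_nonneg (Int.fract_nonneg t)]
  exact (Int.fract_lt_one t).le

lemma locallyIntegrable_fractAboveOne : LocallyIntegrable fractAboveOne := by
  refine (locallyIntegrable_const (1 : ℝ)).mono ?_ (.of_forall fun t => ?_)
  · exact ((Complex.measurable_ofReal.comp measurable_fract).indicator
      measurableSet_Ioi).aestronglyMeasurable
  · simpa using norm_fractAboveOne_le_one t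

lemma fractAboveOne_isBigO_atTop : fractAboveOne =O[atTop] fun t : ℝ => t ^ (-(0 : ℝ)) :=
  .of_bound 1 (.of_forall fun t => by simpa using norm_fractAboveOne_le_one t)

lemma fractAboveOne_isBigO_nhdsGT_zero (b : ℝ) :
    fractAboveOne =O[𝓝[>] 0] fun t : ℝ => t ^ (-b) := by
  refine (isBigO_zero _ _).congr' ?_ .rfl
  filter_upwards [nhdsWithin_le_nhds (Iio_mem_nhds zero_lt_one)] with t ht
  exact (indicator_of_notMem (not_lt.mpr (le_of_lt ht)) _).symm

lemma mellinConvergent_fractAboveOne (hs : s.re < 0) : MellinConvergent fractAboveOne s :=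
  mellinConvergent_of_isBigO_rpow (locallyIntegrable_fractAboveOne.locallyIntegrableOn _)
    fractAboveOne_isBigO_atTop hs (fractAboveOne_isBigO_nhdsGT_zero (s.re - 1)) (sub_one_lt _)

lemma differentiableAt_mellin_fractAboveOne (hs : s.re < 0) :
    DifferentiableAt ℂ (mellin fractAboveOne) s :=
  mellin_differentiableAt_of_isBigO_rpow (locallyIntegrable_fractAboveOne.locallyIntegrableOn _)
    fractAboveOne_isBigO_atTop hs (fractAboveOne_isBigO_nhdsGT_zero (s.re - 1)) (sub_one_lt _)

lemma cpow_smul_fractAboveOne (s : ℂ) (t : ℝ) :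
    (t : ℂ) ^ (s - 1) • fractAboveOne t =
      indicator (Ioi 1) (fun t : ℝ => (t : ℂ) ^ (s - 1) * (Int.fract t : ℝ)) t := by
  rw [fractAboveOne, indicator_mul_right, smul_eq_mul]

lemma mellin_fractAboveOne (s : ℂ) :
    mellin fractAboveOne s = ∫ t : ℝ in Ioi 1, (t : ℂ) ^ (s - 1) * (Int.fract t : ℝ) := by
  simp_rw [mellin, cpow_smul_fractAboveOne]
  rw [setIntegral_indicator measurableSet_Ioi, inter_eq_right.mpr (Ioi_subset_Ioi zero_le_one)]

lemma integrableOn_cpow_mul_fract (hs : s.re < 0) :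
    IntegrableOn (fun t : ℝ => (t : ℂ) ^ (s - 1) * (Int.fract t : ℝ)) (Ioi 1) := by
  have h := mellinConvergent_fractAboveOne hs
  simp_rw [MellinConvergent, cpow_smul_fractAboveOne] at h
  rwa [integrableOn_indicator_iff measurableSet_Ioi,
    inter_eq_left.mpr (Ioi_subset_Ioi zero_le_one)] at h

lemma mellin_fractAboveOne_ofReal_re_nonneg (σ : ℝ) : 0 ≤ (mellin fractAboveOne σ).re := by
  have h : mellin fractAboveOne σ = (∫ t : ℝ in Ioi 1, t ^ (σ - 1) * Int.fract t : ℝ) := by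
    rw [mellin_fractAboveOne, ← integral_complex_ofReal]
    refine setIntegral_congr_fun measurableSet_Ioi fun t ht => ?_
    simp [Complex.ofReal_cpow (one_pos.trans ht).le]
  rw [h, Complex.ofReal_re]
  exact setIntegral_nonneg measurableSet_Ioi fun t ht =>
    mul_nonneg (Real.rpow_nonneg (one_pos.trans ht).le _) (Int.fract_nonneg t)

lemma riemannZeta_eq_mul_integral_floor (hs : 1 < s.re) :
    riemannZeta s = s * ∫ t : ℝ in Ioi 1, (⌊t⌋₊ : ℂ) * (t : ℂ) ^ (-(s + 1)) := by
  have hO : (fun n : ℕ => ∑ k ∈ Finset.Icc 1 n, ‖(1 : ℕ → ℂ) k‖) =O[atTop]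
      fun n => (n : ℝ) ^ (1 : ℝ) := by
    simpa using isBigO_refl (fun n : ℕ => (n : ℝ)) atTop
  simpa [LSeries_one_eq_riemannZeta hs] using LSeries_eq_mul_integral' 1 zero_le_one hs hO

lemma natFloor_mul_cpow {t : ℝ} (ht : 0 < t) (s : ℂ) :
    (⌊t⌋₊ : ℂ) * (t : ℂ) ^ (-(s + 1)) = t ^ (-s) - t ^ (-s - 1) * (Int.fract t : ℝ) := by
  have hfloor : (⌊t⌋₊ : ℂ) = t - (Int.fract t : ℝ) := by
    rw [← Complex.ofReal_sub, Int.self_sub_fract, ← natCast_floor_eq_intCast_floor ht.le,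
      Complex.ofReal_natCast]
  have ht0 : (t : ℂ) ≠ 0 := by exact_mod_cast ht.ne'
  rw [hfloor, neg_add', Complex.cpow_sub _ _ ht0, Complex.cpow_one]
  field_simp

lemma riemannZeta_eq_mul_sub_mellin_fractAboveOne (hs : 1 < s.re) :
    riemannZeta s = s * (1 / (s - 1) - mellin fractAboveOne (-s)) := by
  have hre : (-s).re < -1 := by simpa using hs
  have hpow : ∫ t : ℝ in Ioi 1, (t : ℂ) ^ (-s) = 1 / (s - 1) := by
    rw [integral_Ioi_cpow_of_lt hre one_pos, Complex.ofReal_one, Complex.one_cpow,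
      neg_add_eq_sub, ← neg_sub s 1, neg_div_neg_eq]
  rw [riemannZeta_eq_mul_integral_floor hs, mellin_fractAboveOne, ← hpow,
    ← integral_sub (integrableOn_Ioi_cpow_of_lt hre one_pos)
      (integrableOn_cpow_mul_fract (hre.trans neg_one_lt_zero))]
  congr 1
  exact setIntegral_congr_fun measurableSet_Ioi fun t ht => natFloor_mul_cpow (one_pos.trans ht) s

lemma riemannZeta₁_eq_mul_one_sub_mellin_fractAboveOne (hs : 0 < s.re) :
    riemannZeta₁ s = s * (1 - (s - 1) * mellin fractAboveOne (-s)) := by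
  have hopen (a : ℝ) : IsOpen {z : ℂ | a < z.re} := isOpen_lt continuous_const continuous_re
  have hdiff : DifferentiableOn ℂ (fun z => z * (1 - (z - 1) * mellin fractAboveOne (-z)))
      {z | 0 < z.re} := fun z hz => by
    have hM : DifferentiableAt ℂ (fun z => mellin fractAboveOne (-z)) z :=
      (differentiableAt_mellin_fractAboveOne (by simpa using hz)).comp z differentiableAt_id.neg
    exact (differentiableAt_id.mul
      (((differentiableAt_id.sub_const 1).mul hM).const_sub 1)).differentiableWithinAt
  have hconn : IsPreconnected {z : ℂ | 0 < z.re} := (convex_halfSpace_re_gt 0).isPreconnected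
  have h2 : (2 : ℂ) ∈ {z : ℂ | 0 < z.re} := by simp
  refine AnalyticOnNhd.eqOn_of_preconnected_of_eventuallyEq (𝕜 := ℂ)
    (g := fun z => z * (1 - (z - 1) * mellin fractAboveOne (-z)))
    (differentiable_riemannZeta₁.differentiableOn.analyticOnNhd (hopen 0))
    (hdiff.analyticOnNhd (hopen 0)) hconn h2 ?_ hs
  filter_upwards [(hopen 1).mem_nhds (show (1 : ℝ) < (2 : ℂ).re by simp)] with z hz
  have hz1 : z - 1 ≠ 0 := fun h => by simp [sub_eq_zero.mp h] at hz
  have h := (riemannZeta_eq_inv_sub_mul (sub_ne_zero.mp hz1)).symm.trans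
    (riemannZeta_eq_mul_sub_mellin_fractAboveOne hz)
  field_simp at h
  rw [h]

lemma riemannZeta_ofReal_ne_zero {σ : ℝ} (hσ : 0 < σ) : riemannZeta σ ≠ 0 := by
  rcases le_or_gt 1 σ with h1 | h1
  · exact riemannZeta_ne_zero_of_one_le_re (by simpa using h1)
  have hσ1 : (σ : ℂ) ≠ 1 := by exact_mod_cast h1.ne
  rw [riemannZeta_eq_inv_sub_mul hσ1,
    riemannZeta₁_eq_mul_one_sub_mellin_fractAboveOne (by simpa using hσ)]
  refine mul_ne_zero (inv_ne_zero (sub_ne_zero.mpr hσ1))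
    (mul_ne_zero (by exact_mod_cast hσ.ne') fun h => ?_)
  have hM : 0 ≤ (mellin fractAboveOne (-σ)).re := by
    simpa using mellin_fractAboveOne_ofReal_re_nonneg (-σ)
  have hre : 1 - (σ - 1) * (mellin fractAboveOne (-σ)).re = 0 := by
    simpa using congrArg Complex.re h
  linarith [mul_nonneg (sub_nonneg.mpr h1.le) hM]

lemma im_ne_zero_of_riemannZeta_eq_zero (hs : riemannZeta s = 0) (hre : 0 < s.re) : s.im ≠ 0 :=
  fun him => riemannZeta_ofReal_ne_zero hre
    (by rwa [show (s.re : ℂ) = s from Complex.ext rfl (by simp [him])])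

end Zeta

lemma ofReal_cpow_sub {x : ℝ} (hx : 0 < x) (w : ℂ) (t : ℝ) :
    (x : ℂ) ^ (w - t) = x ^ w * cexp (-Real.log x * t) := by
  have hxc : (x : ℂ) ≠ 0 := by exact_mod_cast hx.ne'
  rw [sub_eq_add_neg, Complex.cpow_add _ _ hxc, Complex.cpow_def_of_ne_zero hxc (-t),
    Complex.ofReal_log hx.le, mul_neg, neg_mul]

theorem stmt19_general {w : ℂ} (hw : ∀ t : ℝ, 0 ≤ t → w ≠ t) {x : ℝ} (hx : 1 < x) :
    let d : ℝ := sInf ((fun t : ℝ => ‖w - t‖) '' Ici 0)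
    ‖(∫ t in Ioi (0 : ℝ), (x : ℂ) ^ (w - t) / (w - t)) - (x : ℂ) ^ w / (w * Real.log x)‖ ≤
      (1 + π) * x ^ w.re / (d * ‖w‖ * Real.log x ^ 2) := by
  have hx0 : 0 < x := one_pos.trans hx
  simp only [sInf_norm_sub_image_Ici, ofReal_cpow_sub hx0, mul_div_assoc, integral_const_mul]
  rw [← mul_one_div _ (w * _), ← mul_sub, norm_mul, Complex.norm_cpow_eq_rpow_re_of_pos hx0]
  calc _ ≤ x ^ w.re * ((1 + π) / (distRay w * ‖w‖ * Real.log x ^ 2)) := by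
        gcongr
        exact norm_integral_exp_div_sub_sub_le hw (Real.log_pos hx)
    _ = _ := by ring

/-- For real `s ≥ 0`, a nontrivial zero `ρ` of `ζ`, `d = min_{t ≥ 0} |ρ-s-t|`, uniformly
for `x ≥ 2`: `∫₀^∞ x^{ρ-s-t}/(ρ-s-t) dt = x^{ρ-s}/((ρ-s) log x)
+ O(x^{Re ρ - s}/(d |ρ-s| (log x)²))`. -/
theorem stmt19 :
    ∃ C : ℝ, 0 < C ∧
      ∀ s : ℝ, 0 ≤ s → ∀ z : ℂ, riemannZeta z = 0 → 0 < z.re → z.re < 1 →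
      ∀ x : ℝ, 2 ≤ x →
      (let d : ℝ := sInf ((fun t : ℝ => ‖z - s - t‖) '' Set.Ici 0)
       ‖(∫ t in Set.Ioi (0 : ℝ), (x : ℂ) ^ (z - s - t) / (z - s - t)) -
           (x : ℂ) ^ (z - (s : ℂ)) / ((z - s) * Real.log x)‖ ≤
         C * x ^ (z.re - s) / (d * ‖z - s‖ * (Real.log x) ^ 2)) := by
  refine ⟨1 + π, by positivity, fun s _ z hz hre _ x hx => ?_⟩
  have hoff (t : ℝ) (_ : 0 ≤ t) : z - s ≠ t := fun h =>
    im_ne_zero_of_riemannZeta_eq_zero hz hre (by simpa using congrArg Complex.im h)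
  simpa only [Complex.sub_re, Complex.ofReal_re] using
    stmt19_general hoff (one_lt_two.trans_le hx)
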